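/- Let V ⊆ ℂⁿ be a connected open set, y⁰ ∈ V, and r ≥ 1. Suppose τ, σ : V → ℂ^m are analytic maps that both satisfy the 'solved' linear system: for every j = 1,…,m and every multi-index γ with |γ| = r, ∂^γ τ^j = ∑_{k=1}^m ∑_{|δ| ≤ r−1} b^{jγ}_{kδ}(y) ∂^δ τ^k on V (and the same equations with τ replaced by σ), where all coefficients b^{jγ}_{kδ} are analytic on V. If ∂^δ τ(y⁰) = ∂^δ σ(y⁰) for every multi-index δ with |δ| ≤ r − 1, then τ = σ on V. -/

import Mathlib

/-!
Let `J` be the jet of a solution, that is, the vector of all `∂^δ τ^j` with `|δ| < r`. Every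
first-order partial derivative of an entry of `J` has the form `∂^γ τ^j` with `|γ| ≤ r`; it is an
entry of `J` if `|γ| < r`, and a linear combination of entries of `J` if `|γ| = r`. So `J` solves a
linear first-order system `∂_i J = A_i J` with coefficients bounded near `y⁰`. The difference `U`
of two solutions satisfies `dU = O(U)`, so if it vanishes at `y⁰` it vanishes nearby, by Grönwall's
inequality along the segments issuing from `y⁰`. The identity theorem propagates `τ = σ` from a
neighbourhood of `y⁰` to `V`.
-/

/-- The partial derivative of `f : ℂⁿ → ℂ` in the `i`-th coordinate direction. -/
noncomputable def pdi {n : ℕ} (i : Fin n) (f : (Fin n → ℂ) → ℂ) : (Fin n → ℂ) → ℂ :=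
  fun y => fderiv ℂ f y (Pi.single i 1)

/-- The iterated partial derivative `∂^α f` of `f : ℂⁿ → ℂ` associated with the
multi-index `α : Fin n → ℕ` (the `i`-th coordinate derivative taken `α i` times). -/
noncomputable def mpd {n : ℕ} (α : Fin n → ℕ) (f : (Fin n → ℂ) → ℂ) : (Fin n → ℂ) → ℂ :=
  (List.finRange n).foldr (fun i g => (pdi i)^[α i] g) f

/-- The finite set of multi-indices in `n` variables of total degree `< d`. -/
def degLt (n d : ℕ) : Finset (Fin n → ℕ) :=
  (Finset.Iic (fun _ => d)).filter (fun δ => ∑ i, δ i < d)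

open Filter Asymptotics
open scoped Topology

lemma eventually_eq_zero_of_fderiv_isBigO {E F : Type*} [NormedAddCommGroup E] [NormedSpace ℝ E]
    [NormedAddCommGroup F] [NormedSpace ℝ F] {U : E → F} {U' : E → E →L[ℝ] F} {x₀ : E}
    (hU : ∀ᶠ x in 𝓝 x₀, HasFDerivAt U (U' x) x) (hO : U' =O[𝓝 x₀] U) (h₀ : U x₀ = 0) :
    ∀ᶠ x in 𝓝 x₀, U x = 0 := by
  obtain ⟨K, hK⟩ := hO.bound
  obtain ⟨ε, hε, hball⟩ := Metric.eventually_nhds_iff_ball.1 (hU.and hK)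
  filter_upwards [Metric.ball_mem_nhds x₀ hε] with x hx
  have segment_mem : ∀ t ∈ Set.Icc (0 : ℝ) 1, AffineMap.lineMap x₀ x t ∈ Metric.ball x₀ ε :=
    fun t ht => (convex_ball x₀ ε).lineMap_mem (Metric.mem_ball_self hε) hx ht
  have hderiv : ∀ t ∈ Set.Icc (0 : ℝ) 1, HasDerivAt (fun t : ℝ => U (AffineMap.lineMap x₀ x t))
      (U' (AffineMap.lineMap x₀ x t) (x - x₀)) t := fun t ht =>
    (hball _ (segment_mem t ht)).1.comp_hasDerivAt t AffineMap.hasDerivAt_lineMap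
  have hbound : ∀ t ∈ Set.Icc (0 : ℝ) 1, ‖U' (AffineMap.lineMap x₀ x t) (x - x₀)‖ ≤
      K * ‖x - x₀‖ * ‖U (AffineMap.lineMap x₀ x t)‖ := fun t ht =>
    calc _ ≤ ‖U' (AffineMap.lineMap x₀ x t)‖ * ‖x - x₀‖ := ContinuousLinearMap.le_opNorm _ _
      _ ≤ K * ‖U (AffineMap.lineMap x₀ x t)‖ * ‖x - x₀‖ := by
        gcongr
        exact (hball _ (segment_mem t ht)).2
      _ = _ := by ring
  simpa using eq_zero_of_abs_deriv_le_mul_abs_self_of_eq_zero_right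
    (fun t ht => (hderiv t ht).continuousAt.continuousWithinAt)
    (fun t ht => (hderiv t (Set.Ico_subset_Icc_self ht)).hasDerivWithinAt) (by simpa using h₀)
    (fun t ht => hbound t (Set.Ico_subset_Icc_self ht)) 1 (by simp)

section PartialDerivatives

variable {n : ℕ} {y : Fin n → ℂ} {f g : (Fin n → ℂ) → ℂ}

lemma pdi_congr (i : Fin n) (h : f =ᶠ[𝓝 y] g) : pdi i f =ᶠ[𝓝 y] pdi i g :=
  h.fderiv.mono fun _ hz => congrArg (fun L : (Fin n → ℂ) →L[ℂ] ℂ => L (Pi.single i 1)) hz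

lemma iterate_pdi_congr (i : Fin n) (k : ℕ) (h : f =ᶠ[𝓝 y] g) :
    (pdi i)^[k] f =ᶠ[𝓝 y] (pdi i)^[k] g := by
  induction k generalizing f g with
  | zero => exact h
  | succ _ ih => exact ih (pdi_congr i h)

lemma analyticAt_pdi (i : Fin n) (hf : AnalyticAt ℂ f y) : AnalyticAt ℂ (pdi i f) y :=
  ((ContinuousLinearMap.apply ℂ ℂ (Pi.single i 1 : Fin n → ℂ)).analyticAt _).comp hf.fderiv

lemma analyticAt_iterate_pdi (i : Fin n) (k : ℕ) (hf : AnalyticAt ℂ f y) :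
    AnalyticAt ℂ ((pdi i)^[k] f) y :=
  Function.Iterate.rec (AnalyticAt ℂ · y) hf (fun _ => analyticAt_pdi i) k

lemma pdi_pdi_apply (i j : Fin n) (hf : AnalyticAt ℂ f y) :
    pdi i (pdi j f) y = fderiv ℂ (fderiv ℂ f) y (Pi.single i 1) (Pi.single j 1) := by
  unfold pdi
  rw [fderiv_clm_apply hf.fderiv.differentiableAt (differentiableAt_const _)]
  simp

lemma pdi_comm (i j : Fin n) (hf : AnalyticAt ℂ f y) :
    pdi i (pdi j f) =ᶠ[𝓝 y] pdi j (pdi i f) := by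
  filter_upwards [hf.eventually_analyticAt] with z hz
  rw [pdi_pdi_apply i j hz, pdi_pdi_apply j i hz]
  exact hz.contDiffAt.isSymmSndFDerivAt_of_omega.eq _ _

lemma pdi_iterate_pdi_comm (i j : Fin n) (k : ℕ) (hf : AnalyticAt ℂ f y) :
    pdi i ((pdi j)^[k] f) =ᶠ[𝓝 y] (pdi j)^[k] (pdi i f) := by
  induction k generalizing f with
  | zero => rfl
  | succ k ih => exact (ih (analyticAt_pdi j hf)).trans (iterate_pdi_congr j k (pdi_comm i j hf))

lemma analyticAt_foldr_pdi (α : Fin n → ℕ) (L : List (Fin n)) (hf : AnalyticAt ℂ f y) :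
    AnalyticAt ℂ (L.foldr (fun i g => (pdi i)^[α i] g) f) y := by
  induction L with
  | nil => exact hf
  | cons a L ih => exact analyticAt_iterate_pdi a _ ih

lemma pdi_foldr_pdi (i : Fin n) (α : Fin n → ℕ) {L : List (Fin n)} (hL : L.Nodup) (hi : i ∈ L)
    (hf : AnalyticAt ℂ f y) :
    pdi i (L.foldr (fun j g => (pdi j)^[α j] g) f) =ᶠ[𝓝 y]
      L.foldr (fun j g => (pdi j)^[(α + Pi.single i 1 : Fin n → ℕ) j] g) f := by
  induction L with
  | nil => simp at hi
  | cons a L ih =>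
    rw [List.nodup_cons] at hL
    rw [List.foldr_cons, List.foldr_cons]
    obtain rfl | hia := eq_or_ne i a
    · have tail_eq : L.foldr (fun j g => (pdi j)^[(α + Pi.single i 1 : Fin n → ℕ) j] g) f =
          L.foldr (fun j g => (pdi j)^[α j] g) f := by
        refine List.foldr_ext _ _ _ fun j hj g => ?_
        have hji : j ≠ i := ne_of_mem_of_not_mem hj hL.1
        simp [hji]
      rw [tail_eq, Pi.add_apply, Pi.single_eq_same, Function.iterate_succ_apply']
    · rw [Pi.add_apply, Pi.single_eq_of_ne hia.symm, add_zero]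
      exact (pdi_iterate_pdi_comm i a _ (analyticAt_foldr_pdi α L hf)).trans
        (iterate_pdi_congr a _ (ih hL.2 (List.mem_of_ne_of_mem hia hi)))

lemma analyticAt_mpd (α : Fin n → ℕ) (hf : AnalyticAt ℂ f y) : AnalyticAt ℂ (mpd α f) y :=
  analyticAt_foldr_pdi α _ hf

lemma pdi_mpd (i : Fin n) (α : Fin n → ℕ) (hf : AnalyticAt ℂ f y) :
    pdi i (mpd α f) y = mpd (α + Pi.single i 1) f y :=
  (pdi_foldr_pdi i α (List.nodup_finRange n) (List.mem_finRange i) hf).eq_of_nhds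

lemma mpd_zero (f : (Fin n → ℂ) → ℂ) : mpd 0 f = f := by
  simp [mpd]

end PartialDerivatives

section FirstOrderSystem

variable {n : ℕ} {κ : Type*} [Fintype κ] {y₀ : Fin n → ℂ}

lemma fderiv_isBigO_of_pdi_isBigO {G : Type*} [SeminormedAddCommGroup G] {g : (Fin n → ℂ) → G}
    {U : (Fin n → ℂ) → κ → ℂ} (hU : ∀ᶠ y in 𝓝 y₀, DifferentiableAt ℂ U y)
    (hO : ∀ i q, pdi i (fun y => U y q) =O[𝓝 y₀] g) : fderiv ℂ U =O[𝓝 y₀] g := by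
  obtain ⟨C, -, hC⟩ := (Pi.basisFun ℂ (Fin n)).exists_opNorm_le (F := κ → ℂ)
  have of_basis : fderiv ℂ U =O[𝓝 y₀] fun y i => fderiv ℂ U y (Pi.single i 1) :=
    IsBigO.of_bound C <| Eventually.of_forall fun y => hC (norm_nonneg _) fun i => by
      simpa using norm_le_pi_norm (fun i => fderiv ℂ U y (Pi.single i 1)) i
  refine of_basis.trans (isBigO_pi.2 fun i => isBigO_pi.2 fun q => (hO i q).congr' ?_ .rfl)
  filter_upwards [hU] with y hy
  simp only [pdi, fderiv_apply hy, ContinuousLinearMap.comp_apply, ContinuousLinearMap.proj_apply]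

lemma eventuallyEq_of_pdi_eq_sum {A : Fin n → κ → κ → (Fin n → ℂ) → ℂ}
    (hA : ∀ i q p, A i q p =O[𝓝 y₀] fun _ => (1 : ℝ)) {J J' : (Fin n → ℂ) → κ → ℂ}
    (hJd : ∀ᶠ y in 𝓝 y₀, DifferentiableAt ℂ J y) (hJ'd : ∀ᶠ y in 𝓝 y₀, DifferentiableAt ℂ J' y)
    (hJ : ∀ᶠ y in 𝓝 y₀, ∀ i q, pdi i (fun z => J z q) y = ∑ p, A i q p y * J y p)
    (hJ' : ∀ᶠ y in 𝓝 y₀, ∀ i q, pdi i (fun z => J' z q) y = ∑ p, A i q p y * J' y p)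
    (h₀ : J y₀ = J' y₀) : J =ᶠ[𝓝 y₀] J' := by
  have hUd : ∀ᶠ y in 𝓝 y₀, DifferentiableAt ℂ (J - J') y := by
    filter_upwards [hJd, hJ'd] with y using DifferentiableAt.sub
  have hpdi : ∀ i q, pdi i (fun y => (J - J') y q) =ᶠ[𝓝 y₀]
      fun y => ∑ p, A i q p y * (J - J') y p := fun i q => by
    filter_upwards [hJd, hJ'd, hJ, hJ'] with y hyd hyd' hy hy'
    simp only [Pi.sub_apply, mul_sub, Finset.sum_sub_distrib, ← hy, ← hy', pdi]
    rw [fderiv_fun_sub (differentiableAt_pi.1 hyd q) (differentiableAt_pi.1 hyd' q)]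
    rfl
  have hentry : ∀ p, (fun y => (J - J') y p) =O[𝓝 y₀] fun y => ‖(J - J') y‖ := fun p =>
    (isBigO_pi.1 (isBigO_refl (J - J') (𝓝 y₀)) p).norm_right
  have hO : fderiv ℂ (J - J') =O[𝓝 y₀] (J - J') :=
    fderiv_isBigO_of_pdi_isBigO hUd fun i q => (hpdi i q).trans_isBigO <|
      IsBigO.fun_sum fun p _ => by
        simpa only [one_mul, isBigO_norm_right] using (hA i q p).mul (hentry p)
  have hOℝ : (fun y => (fderiv ℂ (J - J') y).restrictScalars ℝ) =O[𝓝 y₀] (J - J') :=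
    .of_norm_left <| by
      simpa only [ContinuousLinearMap.norm_restrictScalars] using hO.norm_left
  have hzero : ∀ᶠ y in 𝓝 y₀, (J - J') y = 0 := eventually_eq_zero_of_fderiv_isBigO
    (hUd.mono fun y hy => hy.hasFDerivAt.restrictScalars ℝ) hOℝ (sub_eq_zero.2 h₀)
  exact hzero.mono fun _ => sub_eq_zero.1

end FirstOrderSystem

lemma mem_degLt {n d : ℕ} {δ : Fin n → ℕ} : δ ∈ degLt n d ↔ ∑ i, δ i < d := by
  rw [degLt, Finset.mem_filter, Finset.mem_Iic, and_iff_right_of_imp]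
  exact fun h i => (Finset.single_le_sum_of_canonicallyOrdered (Finset.mem_univ i)).trans h.le

lemma sum_add_single_le_of_mem_degLt {n d : ℕ} {δ : Fin n → ℕ} (hδ : δ ∈ degLt n d) (i : Fin n) :
    ∑ l, (δ + Pi.single i 1 : Fin n → ℕ) l ≤ d := by
  simpa [Finset.sum_add_distrib] using mem_degLt.1 hδ

section SolvedSystem

variable {n r : ℕ} {ι : Type*} {y y₀ : Fin n → ℂ}
  {b : ι → (Fin n → ℕ) → ι → (Fin n → ℕ) → (Fin n → ℂ) → ℂ} {u : (Fin n → ℂ) → ι → ℂ}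

/-- The jet of order `r - 1` of a vector-valued function, with one entry `∂^δ u^j` for each
component `j` and each multi-index `δ` of degree `< r`. -/
noncomputable def jet (r : ℕ) (u : (Fin n → ℂ) → ι → ℂ) (y : Fin n → ℂ) (q : ι × degLt n r) : ℂ :=
  mpd q.2 (fun z => u z q.1) y

lemma differentiableAt_jet [Fintype ι] (hu : AnalyticAt ℂ u y) :
    DifferentiableAt ℂ (jet r u) y :=
  differentiableAt_pi.2 fun q =>
    (analyticAt_mpd q.2.1 (analyticAt_pi_iff.1 hu q.1)).differentiableAt

/-- The coefficients expressing `∂^γ u^j`, for every `|γ| ≤ r`, through the jet of `u`: those of the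
solved system when `|γ| = r`, and the Kronecker delta when `∂^γ u^j` is itself an entry of the
jet. -/
def jetCoeff [DecidableEq ι] (r : ℕ) (b : ι → (Fin n → ℕ) → ι → (Fin n → ℕ) → (Fin n → ℂ) → ℂ)
    (j : ι) (γ : Fin n → ℕ) (q : ι × degLt n r) (y : Fin n → ℂ) : ℂ :=
  if h : γ ∈ degLt n r then (Pi.single (j, ⟨γ, h⟩) 1 : ι × degLt n r → ℂ) q else b j γ q.1 q.2 y

lemma jetCoeff_isBigO_one [DecidableEq ι]
    (hb : ∀ j γ, ∑ i, γ i = r → ∀ k, ∀ δ ∈ degLt n r, b j γ k δ =O[𝓝 y₀] fun _ => (1 : ℝ))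
    (j : ι) {γ : Fin n → ℕ} (hγ : ∑ i, γ i ≤ r) (q : ι × degLt n r) :
    jetCoeff r b j γ q =O[𝓝 y₀] fun _ => (1 : ℝ) := by
  unfold jetCoeff
  split_ifs with h
  · exact isBigO_const_const _ one_ne_zero _
  · exact hb j γ (hγ.antisymm (not_lt.1 (mt mem_degLt.2 h))) q.1 q.2 q.2.2

variable [Fintype ι]

/-- The solved linear system of order `r` with coefficients `b`, imposed at the single point
`y`. Only the values of `b` with `|γ| = r` and `|δ| < r` enter. -/
def SolvesSystemAt (r : ℕ) (b : ι → (Fin n → ℕ) → ι → (Fin n → ℕ) → (Fin n → ℂ) → ℂ)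
    (u : (Fin n → ℂ) → ι → ℂ) (y : Fin n → ℂ) : Prop :=
  ∀ (j : ι) (γ : Fin n → ℕ), ∑ i, γ i = r →
    mpd γ (fun z => u z j) y = ∑ k, ∑ δ ∈ degLt n r, b j γ k δ y * mpd δ (fun z => u z k) y

lemma SolvesSystemAt.mpd_eq_sum_jet [DecidableEq ι] (hu : SolvesSystemAt r b u y) (j : ι)
    {γ : Fin n → ℕ} (hγ : ∑ i, γ i ≤ r) :
    mpd γ (fun z => u z j) y = ∑ q, jetCoeff r b j γ q y * jet r u y q := by
  by_cases h : γ ∈ degLt n r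
  · simp [jetCoeff, h, jet, Pi.single_apply]
  · simp only [jetCoeff, dif_neg h, jet, Fintype.sum_prod_type]
    rw [hu j γ (hγ.antisymm (not_lt.1 (mt mem_degLt.2 h)))]
    exact Finset.sum_congr rfl fun k _ => (Finset.sum_coe_sort (degLt n r)
      fun δ => b j γ k δ y * mpd δ (fun z => u z k) y).symm

lemma SolvesSystemAt.pdi_jet [DecidableEq ι] (hu : SolvesSystemAt r b u y)
    (hua : AnalyticAt ℂ u y) (i : Fin n) (q : ι × degLt n r) :
    pdi i (fun z => jet r u z q) y =
      ∑ p, jetCoeff r b q.1 (q.2.1 + Pi.single i 1) p y * jet r u y p :=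
  (pdi_mpd i q.2 (analyticAt_pi_iff.1 hua q.1)).trans
    (hu.mpd_eq_sum_jet q.1 (sum_add_single_le_of_mem_degLt q.2.2 i))

lemma SolvesSystemAt.eq_of_jet_eq {v : (Fin n → ℂ) → ι → ℂ} (hu : SolvesSystemAt r b u y)
    (hv : SolvesSystemAt r b v y) (h : jet r u y = jet r v y) : u y = v y := by
  classical
  funext j
  have hj := hu.mpd_eq_sum_jet (γ := 0) j (by simp)
  rwa [h, ← hv.mpd_eq_sum_jet j (by simp), mpd_zero, mpd_zero] at hj

end SolvedSystem

theorem solved_system_unique_solution_general {n r : ℕ} {ι : Type*} [Fintype ι]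
    {V : Set (Fin n → ℂ)} (hV : IsPreconnected V) {y₀ : Fin n → ℂ} (hy₀ : y₀ ∈ V)
    {b : ι → (Fin n → ℕ) → ι → (Fin n → ℕ) → (Fin n → ℂ) → ℂ}
    (hb : ∀ j γ, ∑ i, γ i = r → ∀ k, ∀ δ ∈ degLt n r, b j γ k δ =O[𝓝 y₀] fun _ => (1 : ℝ))
    {τ σ : (Fin n → ℂ) → ι → ℂ} (hτa : AnalyticOnNhd ℂ τ V) (hσa : AnalyticOnNhd ℂ σ V)
    (hτ : ∀ᶠ y in 𝓝 y₀, SolvesSystemAt r b τ y) (hσ : ∀ᶠ y in 𝓝 y₀, SolvesSystemAt r b σ y)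
    (h₀ : jet r τ y₀ = jet r σ y₀) : Set.EqOn τ σ V := by
  classical
  have hτn := (hτa y₀ hy₀).eventually_analyticAt
  have hσn := (hσa y₀ hy₀).eventually_analyticAt
  have hjet : jet r τ =ᶠ[𝓝 y₀] jet r σ := by
    refine eventuallyEq_of_pdi_eq_sum
      (A := fun i q => jetCoeff r b q.1 (q.2.1 + Pi.single i 1)) (fun i q => ?_)
      (hτn.mono fun _ => differentiableAt_jet) (hσn.mono fun _ => differentiableAt_jet)
      ((hτ.and hτn).mono fun _ h => h.1.pdi_jet h.2) ((hσ.and hσn).mono fun _ h => h.1.pdi_jet h.2)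
      h₀
    exact jetCoeff_isBigO_one hb q.1 (sum_add_single_le_of_mem_degLt q.2.2 i)
  refine hτa.eqOn_of_preconnected_of_eventuallyEq hσa hV hy₀ ?_
  filter_upwards [hτ, hσ, hjet] with y hyτ hyσ using hyτ.eq_of_jet_eq hyσ

/-- Let `V ⊆ ℂⁿ` be a connected open set, `y⁰ ∈ V`, and `r ≥ 1`.
Suppose `τ, σ : V → ℂ^m` are analytic maps that both satisfy the "solved" linear system
`∂^γ τ^j = ∑_{k=1}^m ∑_{|δ| ≤ r−1} b^{jγ}_{kδ}(y) ∂^δ τ^k` on `V`, for every `j` and every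
multi-index `γ` with `|γ| = r`, with all coefficients `b^{jγ}_{kδ}` analytic on `V`.
If `∂^δ τ(y⁰) = ∂^δ σ(y⁰)` for every multi-index `δ` with `|δ| ≤ r − 1`, then `τ = σ` on `V`. -/
theorem solved_system_unique_solution
    (n m r : ℕ) (hr : 1 ≤ r)
    (V : Set (Fin n → ℂ)) (hVopen : IsOpen V) (hVconn : IsConnected V)
    (y0 : Fin n → ℂ) (hy0 : y0 ∈ V)
    (b : Fin m → (Fin n → ℕ) → Fin m → (Fin n → ℕ) → (Fin n → ℂ) → ℂ)
    (hb : ∀ j γ k δ, AnalyticOnNhd ℂ (b j γ k δ) V)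
    (τ σ : (Fin n → ℂ) → Fin m → ℂ)
    (hτa : ∀ j, AnalyticOnNhd ℂ (fun y => τ y j) V)
    (hσa : ∀ j, AnalyticOnNhd ℂ (fun y => σ y j) V)
    (hτ : ∀ (j : Fin m) (γ : Fin n → ℕ), (∑ i, γ i) = r → ∀ y ∈ V,
      mpd γ (fun z => τ z j) y
        = ∑ k, ∑ δ ∈ degLt n r, b j γ k δ y * mpd δ (fun z => τ z k) y)
    (hσ : ∀ (j : Fin m) (γ : Fin n → ℕ), (∑ i, γ i) = r → ∀ y ∈ V,
      mpd γ (fun z => σ z j) y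
        = ∑ k, ∑ δ ∈ degLt n r, b j γ k δ y * mpd δ (fun z => σ z k) y)
    (h0 : ∀ δ : Fin n → ℕ, (∑ i, δ i) < r → ∀ j,
      mpd δ (fun z => τ z j) y0 = mpd δ (fun z => σ z j) y0) :
    ∀ y ∈ V, τ y = σ y := by
  have hVnhds : V ∈ 𝓝 y0 := hVopen.mem_nhds hy0
  exact solved_system_unique_solution_general hVconn.isPreconnected hy0
    (fun j γ _ k δ _ => (hb j γ k δ y0 hy0).continuousAt.isBigO_one ℝ)
    (AnalyticOnNhd.pi hτa) (AnalyticOnNhd.pi hσa)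
    (mem_of_superset hVnhds fun y hy j γ hγ => hτ j γ hγ y hy)
    (mem_of_superset hVnhds fun y hy j γ hγ => hσ j γ hγ y hy)
    (funext fun q => h0 q.2 (mem_degLt.1 q.2.2) q.1)
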